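/- arXiv:1404.1820 — 3 statements merged into one kernel-verified Lean document; each statement's English description precedes it below -/
import Mathlib

section
/- Let n, m be positive integers, let Q be an n×n positive definite Hermitian complex matrix, let G be an m×n complex matrix, let W be an m×m positive semidefinite Hermitian complex matrix, and let R > 0 with α = 2^R − 1. If the determinant det(Iₙ + Q⁻¹ Gᴴ W G) — which is a positive real number — satisfies det(Iₙ + Q⁻¹ Gᴴ W G) ≤ 2^R (equivalently, log₂ det(Iₙ + Q⁻¹ Gᴴ W G) ≤ R), then Gᴴ W G ⪯ α Q, i.e., α Q − Gᴴ W G is positive semidefinite. -/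
open Matrix
open scoped ComplexOrder

open scoped MatrixOrder Matrix.Norms.L2Operator in
lemma exists_factor {n : ℕ} (Q : Matrix (Fin n) (Fin n) ℂ) (hQ : Q.PosDef) :
    ∃ S : Matrix (Fin n) (Fin n) ℂ, IsUnit S ∧ Q = Sᴴ * S := by
  obtain ⟨y, hy, h⟩ := CStarAlgebra.isStrictlyPositive_iff_eq_star_mul_self.mp
    hQ.isStrictlyPositive
  exact ⟨y, hy, h⟩

lemma normalized {n : ℕ} (B : Matrix (Fin n) (Fin n) ℂ) (hB : B.PosSemidef) (r : ℝ)
    (h : (1 + B).det ≤ (r : ℂ)) : (((r - 1 : ℝ) : ℂ) • (1 : Matrix (Fin n) (Fin n) ℂ) - B).PosSemidef := by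
  obtain ⟨V, hV1, hV2, hBV⟩ : ∃ V : Matrix (Fin n) (Fin n) ℂ, V * Vᴴ = 1 ∧ Vᴴ * V = 1 ∧
      B = V * diagonal (fun i => (hB.1.eigenvalues i : ℂ)) * Vᴴ := by
    refine ⟨hB.1.eigenvectorUnitary, ?_, ?_, ?_⟩
    · exact Unitary.coe_mul_star_self _
    · exact Unitary.coe_star_mul_self _
    · exact hB.1.spectral_theorem
  have hnn := hB.eigenvalues_nonneg
  generalize hB.1.eigenvalues = l at hBV hnn
  have hdet : (1 + B).det = ((∏ i, (1 + l i) : ℝ) : ℂ) := by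
    have : 1 + B = V * diagonal (fun i => (1 + l i : ℂ)) * Vᴴ := by
      rw [← diagonal_add, diagonal_one, mul_add, add_mul, mul_one, hV1, hBV]
    rw [this, det_mul_right_comm, hV1, one_mul, det_diagonal]
    push_cast
    rfl
  rw [hdet] at h
  have h' : ∏ i, (1 + l i) ≤ r := by exact_mod_cast h
  have hle : ∀ j, l j ≤ r - 1 := by
    intro j
    have h1 : 1 + l j ≤ ∏ i, (1 + l i) := by
      rw [← Finset.mul_prod_erase _ _ (Finset.mem_univ j)]
      refine le_mul_of_one_le_right (by linarith [hnn j]) ?_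
      exact Finset.prod_induction _ (fun x : ℝ => 1 ≤ x) (fun a b ha hb => one_le_mul_of_one_le_of_one_le ha hb)
        le_rfl fun i _ => by linarith [hnn i]
    linarith
  have : ((r - 1 : ℝ) : ℂ) • (1 : Matrix (Fin n) (Fin n) ℂ) - B
      = V * diagonal (fun i => ((r - 1 - l i : ℝ) : ℂ)) * Vᴴ := by
    have e : diagonal (fun i => ((r - 1 - l i : ℝ) : ℂ)) =
        ((r - 1 : ℝ) : ℂ) • (1 : Matrix (Fin n) (Fin n) ℂ) - diagonal (fun i => (l i : ℂ)) := by
      rw [smul_one_eq_diagonal, diagonal_sub]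
      simp
    rw [e, mul_sub, sub_mul, ← hBV, Matrix.mul_smul, Matrix.smul_mul, mul_one, hV1]
  rw [this]
  refine PosSemidef.mul_mul_conjTranspose_same (PosSemidef.diagonal ?_) V
  intro i
  have := hle i
  change (0 : ℂ) ≤ ((r - 1 - l i : ℝ) : ℂ)
  exact_mod_cast (by linarith : (0:ℝ) ≤ r - 1 - l i)

/-- Proposition 1: the capacity constraint C2 implies the LMI constraint C̄2. -/
theorem prop1_implication {n m : ℕ} (hn : 0 < n) (hm : 0 < m)
    (Q : Matrix (Fin n) (Fin n) ℂ) (hQ : Q.PosDef)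
    (G : Matrix (Fin m) (Fin n) ℂ)
    (W : Matrix (Fin m) (Fin m) ℂ) (hW : W.PosSemidef)
    (R α : ℝ) (hR : 0 < R) (hα : α = 2 ^ R - 1)
    (hdet : (1 + Q⁻¹ * (Gᴴ * W * G)).det ≤ (((2 : ℝ) ^ R : ℝ) : ℂ)) :
    ((α : ℂ) • Q - Gᴴ * W * G).PosSemidef := by
  obtain ⟨S, hS, rfl⟩ := exists_factor Q hQ
  have hM := hW.conjTranspose_mul_mul_same G
  generalize Gᴴ * W * G = M at hdet hM
  have hB := hM.conjTranspose_mul_mul_same S⁻¹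
  have hSd : IsUnit S.det := (isUnit_iff_isUnit_det S).mp hS
  have hSi : S⁻¹ * S = 1 := nonsing_inv_mul S hSd
  have hSh : Sᴴ * (S⁻¹)ᴴ = 1 := by rw [← conjTranspose_mul, hSi, conjTranspose_one]
  have hN := normalized _ hB (2 ^ R) (by
    rw [Matrix.mul_inv_rev, ← conjTranspose_nonsing_inv, mul_assoc, det_one_add_mul_comm] at hdet
    exact hdet)
  have := hN.conjTranspose_mul_mul_same S
  rw [← hα] at this
  convert this using 1
  rw [mul_sub, sub_mul, Matrix.mul_smul, Matrix.smul_mul, mul_one]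
  congr 1
  calc M = (Sᴴ * (S⁻¹)ᴴ) * M * (S⁻¹ * S) := by rw [hSh, hSi, one_mul, mul_one]
    _ = _ := by simp only [mul_assoc]
end

section
/- Let n, m be positive integers, let Q be an n×n positive definite Hermitian complex matrix, let G be an m×n complex matrix, let w ∈ ℂᵐ, set W = w wᴴ (a rank-at-most-one positive semidefinite Hermitian matrix), and let R > 0 with α = 2^R − 1. Then det(Iₙ + Q⁻¹ Gᴴ W G) ≤ 2^R holds if and only if Gᴴ W G ⪯ α Q, i.e., α Q − Gᴴ W G is positive semidefinite. -/
open Matrix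
open scoped ComplexOrder

/-- Equivalence part of Proposition 1: for a rank-one `W = w wᴴ`,
constraints C2 and C̄2 are equivalent. -/
theorem prop1_equivalence {n m : ℕ} (hn : 0 < n) (hm : 0 < m)
    (Q : Matrix (Fin n) (Fin n) ℂ) (hQ : Q.PosDef)
    (G : Matrix (Fin m) (Fin n) ℂ)
    (w : Fin m → ℂ)
    (R α : ℝ) (hR : 0 < R) (hα : α = 2 ^ R - 1) :
    (1 + Q⁻¹ * (Gᴴ * vecMulVec w (star w) * G)).det ≤ (((2 : ℝ) ^ R : ℝ) : ℂ) ↔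
      ((α : ℂ) • Q - Gᴴ * vecMulVec w (star w) * G).PosSemidef := by
  have hαpos : 0 < α := by
    have := Real.one_lt_rpow (x := 2) (by norm_num) hR
    linarith
  have h2 : (2 : ℝ) ^ R = 1 + α := by linarith
  have hαc : (0 : ℂ) < (α : ℂ) := by exact_mod_cast hαpos
  obtain ⟨B, hB⟩ : ∃ B : Matrix (Fin n) Unit ℂ,
      Gᴴ * vecMulVec w (star w) * G = B * Bᴴ := by
    refine ⟨Gᴴ * replicateCol Unit w, ?_⟩
    rw [conjTranspose_mul, conjTranspose_conjTranspose, conjTranspose_replicateCol,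
      vecMulVec_eq Unit]
    simp only [Matrix.mul_assoc]
  rw [hB, h2, ← Matrix.mul_assoc, det_one_add_mul_comm]
  have hαQ : ((α : ℂ) • Q).PosDef := hQ.smul hαc
  have hQu : IsUnit Q.det := (Matrix.isUnit_iff_isUnit_det _).1 hQ.isUnit
  have : Invertible ((α : ℂ) • Q) := hαQ.isUnit.invertible
  have : Invertible (1 : Matrix Unit Unit ℂ) := invertibleOne
  have e1 := PosDef.fromBlocks₁₁ B (1 : Matrix Unit Unit ℂ) hαQ
  have e2 := PosDef.fromBlocks₂₂ ((α : ℂ) • Q) B (PosDef.one (n := Unit) (R := ℂ))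
  rw [inv_one, Matrix.mul_one] at e2
  rw [← e2, e1]
  have hinv : ((α : ℂ) • Q)⁻¹ = (α : ℂ)⁻¹ • Q⁻¹ := by
    apply Matrix.inv_eq_right_inv
    rw [Matrix.smul_mul, Matrix.mul_smul, smul_smul, mul_inv_cancel₀ hαc.ne',
      Matrix.mul_nonsing_inv _ hQu, one_smul]
  rw [hinv, Matrix.mul_smul, Matrix.smul_mul, ← Matrix.mul_assoc]
  have hM : (Bᴴ * Q⁻¹ * B).IsHermitian := isHermitian_conjTranspose_mul_mul B hQ.inv.isHermitian
  generalize Bᴴ * Q⁻¹ * B = M at hM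
  have hd : (1 : Matrix Unit Unit ℂ) - (α : ℂ)⁻¹ • M
      = diagonal (fun i => 1 - (α : ℂ)⁻¹ * M i i) := by
    ext i j
    simp
  rw [hd, posSemidef_diagonal_iff, det_unique]
  have hr : ((M () ()).re : ℂ) = M () () := hM.coe_re_apply_self ()
  obtain ⟨s, hs⟩ : ∃ s : ℝ, ∀ i : Unit, M i i = (s : ℂ) := ⟨(M () ()).re, fun i => hr.symm⟩
  simp only [hs, Matrix.add_apply, Matrix.one_apply_eq]
  have k : (1 - (α : ℂ)⁻¹ * (s : ℂ)) = ((1 - α⁻¹ * s : ℝ) : ℂ) := by push_cast; rfl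
  have k2 : (1 + (s : ℂ)) = ((1 + s : ℝ) : ℂ) := by push_cast; rfl
  rw [k, k2, Complex.real_le_real]
  simp only [forall_const, Complex.zero_le_real]
  rw [sub_nonneg, inv_mul_le_one₀ hαpos]
  exact add_le_add_iff_left 1
end

section
/- For an n×n positive semidefinite Hermitian complex matrix A, equality det(I + A) = 1 + Tr(A) holds if and only if rank(A) ≤ 1. -/
open Matrix
open scoped ComplexOrder

lemma aux_prod {ι : Type*} [DecidableEq ι] (f : ι → ℝ) (hf : ∀ i, 0 ≤ f i) (s : Finset ι) :
    1 + ∑ i ∈ s, f i ≤ ∏ i ∈ s, (1 + f i) ∧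
    (∏ i ∈ s, (1 + f i) = 1 + ∑ i ∈ s, f i ↔
      ∀ i ∈ s, ∀ j ∈ s, f i ≠ 0 → f j ≠ 0 → i = j) := by
  induction s using Finset.induction_on with
  | empty => simp
  | insert a s ha ih =>
    obtain ⟨h1, h2⟩ := ih
    rw [Finset.prod_insert ha, Finset.sum_insert ha]
    have hS : 0 ≤ ∑ i ∈ s, f i := Finset.sum_nonneg fun i _ => hf i
    have hfa := hf a
    have hm : 0 ≤ f a * (∏ i ∈ s, (1 + f i) - 1) := mul_nonneg hfa (by linarith)
    refine ⟨by nlinarith, ?_, ?_⟩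
    · intro h
      have e1 : ∏ i ∈ s, (1 + f i) = 1 + ∑ i ∈ s, f i := by nlinarith
      have e2 : f a * ∑ i ∈ s, f i = 0 := by rw [e1] at h; linarith
      have e3 : ∀ j ∈ s, f a ≠ 0 → f j = 0 := by
        intro j hj hne
        have := (mul_eq_zero.mp e2).resolve_left hne
        exact (Finset.sum_eq_zero_iff_of_nonneg fun i _ => hf i).mp this j hj
      have e4 := h2.mp e1
      intro i hi j hj hi0 hj0
      rcases Finset.mem_insert.mp hi with rfl | his
      · rcases Finset.mem_insert.mp hj with rfl | hj
        · rfl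
        · exact absurd (e3 j hj hi0) hj0
      · rcases Finset.mem_insert.mp hj with rfl | hj
        · exact absurd (e3 i his hj0) hi0
        · exact e4 i his j hj hi0 hj0
    · intro h
      have e1 := h2.mpr fun i hi j hj =>
        h i (Finset.mem_insert_of_mem hi) j (Finset.mem_insert_of_mem hj)
      have e2 : f a * ∑ i ∈ s, f i = 0 := by
        by_cases h0 : f a = 0
        · simp [h0]
        · rw [Finset.sum_eq_zero, mul_zero]
          intro j hj
          by_contra hj0
          have := h a (Finset.mem_insert_self a s) j (Finset.mem_insert_of_mem hj) h0 hj0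
          exact ha (this ▸ hj)
      rw [e1]; linarith

lemma aux_det {n : ℕ} (A : Matrix (Fin n) (Fin n) ℂ) (hA : A.IsHermitian) :
    (1 + A).det = ∏ i, (1 + (hA.eigenvalues i : ℂ)) := by
  have h := congrArg (Polynomial.eval (-1)) hA.charpoly_eq
  rw [Matrix.eval_charpoly, Polynomial.eval_prod] at h
  have e : Matrix.scalar (Fin n) (-1 : ℂ) - A = -(1 + A) := by
    rw [map_neg, map_one]; abel
  have e' : ∀ i, Polynomial.eval (-1) (Polynomial.X - Polynomial.C (hA.eigenvalues i : ℂ))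
      = -1 * (1 + (hA.eigenvalues i : ℂ)) := by
    intro i; simp; ring
  rw [e, Matrix.det_neg] at h
  erw [Finset.prod_congr rfl fun i _ => e' i] at h
  rw [Finset.prod_mul_distrib, Finset.prod_const, Finset.card_univ] at h
  exact mul_left_cancel₀ (pow_ne_zero _ (by norm_num)) h

/-- Lemma 1 (equality characterization): for `A ⪰ 0`,
`det (I + A) = 1 + Tr A` iff `rank A ≤ 1`. -/
theorem det_one_add_eq_one_add_trace_iff {n : ℕ}
    (A : Matrix (Fin n) (Fin n) ℂ) (hA : A.PosSemidef) :
    (1 + A).det = (1 : ℂ) + A.trace ↔ A.rank ≤ 1 := by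
  have hH := hA.isHermitian
  rw [aux_det A hH, hH.trace_eq_sum_eigenvalues, hH.rank_eq_card_non_zero_eigs,
    Fintype.card_le_one_iff]
  have := (aux_prod hH.eigenvalues hA.eigenvalues_nonneg Finset.univ).2
  have c : (∏ i, (1 + (hH.eigenvalues i : ℂ)) = 1 + ∑ i, (hH.eigenvalues i : ℂ)) ↔
      ∏ i, (1 + hH.eigenvalues i) = 1 + ∑ i, hH.eigenvalues i := by
    norm_cast
  refine c.trans (this.trans ?_)
  constructor
  · rintro h ⟨i, hi⟩ ⟨j, hj⟩
    exact Subtype.ext (h i (Finset.mem_univ _) j (Finset.mem_univ _) hi hj)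
  · intro h i _ j _ hi hj
    exact congrArg Subtype.val (h ⟨i, hi⟩ ⟨j, hj⟩)
end
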